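/- arXiv:1310.3718 — 2 statements merged into one kernel-verified Lean document; each statement's English description precedes it below -/
import Mathlib

section
/- For any curved A∞-algebra (A,m), the identity [m, I − E] = m holds for the Gerstenhaber bracket (now including the arity-0 component m_0); in particular [m] = 0 in the Hochschild cohomology HH^2(A,A) of the curved A∞-algebra. -/
open scoped BigOperators

/-- A graded operation `A^{⊗n} → A` of internal degree `d` with respect to a grading `𝒜`
of `A`: an `n`-multilinear map sending tuples that are homogeneous of degrees `dg i`
into the homogeneous piece of degree `(∑ i, dg i) + d`.  This is an element of
`C^{n,d}(A,A) = Hom^d(A^{⊗n}, A)`. -/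
structure GradedOp (F : Type*) [Field F] (A : Type*) [AddCommGroup A] [Module F A]
    (𝒜 : ℤ → Submodule F A) (n : ℕ) (d : ℤ) where
  toFun : MultilinearMap F (fun _ : Fin n => A) A
  map_graded : ∀ (dg : Fin n → ℤ) (x : Fin n → A), (∀ i, x i ∈ 𝒜 (dg i)) →
    toFun x ∈ 𝒜 ((∑ i, dg i) + d)

namespace Ainf

variable {F : Type*} [Field F] {A : Type*} [AddCommGroup A] [Module F A]

/-- Indexing into a tuple, with junk value `0` out of range. -/
def get {N : ℕ} (x : Fin N → A) (p : ℕ) : A := if h : p < N then x ⟨p, h⟩ else 0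

/-- The block `x_{r+1}, …, x_{r+s}` of a tuple. -/
def blockFun {N : ℕ} (x : Fin N → A) (r s : ℕ) : Fin s → A := fun i => get x (r + (i : ℕ))

/-- The tuple `x_1, …, x_r, a, x_{r+s+1}, …, x_N` obtained from `x` by replacing the block
of length `s` starting at position `r` by the single entry `a`; the intended arity is
`u = r + 1 + (N - (r + s))`. -/
def splice {N : ℕ} (x : Fin N → A) (r s : ℕ) (a : A) {u : ℕ} : Fin u → A :=
  fun j => if (j : ℕ) < r then get x j else if (j : ℕ) = r then a else get x ((j : ℕ) + s - 1)

/-- Sum of the degrees of the entries before position `i`. -/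
def degSum {N : ℕ} (dg : Fin N → ℤ) (i : ℕ) : ℤ :=
  ∑ j : Fin N, if (j : ℕ) < i then dg j else 0

/-- The sign `(-1)^e`. -/
def sgn (F : Type*) [Field F] (e : ℤ) : F := (-1 : F) ^ e

/-- The construction equations of a curved A∞-algebra: for all `n ≥ 0` and all
homogeneous `x_1, …, x_n`,
`∑_{n=r+s+t} (-1)^{δ(x_1,…,x_r)} m_{r+1+t}(x_1, …, x_r, m_s(x_{r+1},…,x_{r+s}), …, x_n) = 0`,
where `δ(x_1, …, x_r) = ∑_{i=1}^r (|x_i| - 1)` and `s = 0` terms insert the curvature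
`m_0(1)`. -/
def CurvedEqns (𝒜 : ℤ → Submodule F A) (m : ∀ n : ℕ, GradedOp F A 𝒜 n (2 - (n : ℤ))) :
    Prop :=
  ∀ (n : ℕ) (dg : Fin n → ℤ) (x : Fin n → A), (∀ i, x i ∈ 𝒜 (dg i)) →
    (∑ r : Fin (n + 1), ∑ s : Fin (n + 1 - (r : ℕ)),
      sgn F (degSum dg (r : ℕ) - (r : ℕ)) •
        (m ((r : ℕ) + 1 + (n - ((r : ℕ) + (s : ℕ))))).toFun
          (splice x (r : ℕ) (s : ℕ) ((m (s : ℕ)).toFun (blockFun x (r : ℕ) (s : ℕ))))) = 0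

/-- A curved A∞-algebra structure on the `ℤ`-graded vector space `A = ⊕ₖ 𝒜 k`:
graded maps `mₙ : A^{⊗n} → A` of degree `2 - n` for `n ≥ 0` (with curvature
`m_0(1) ∈ A^2`) satisfying the construction equations; for simplicity `m_k = 0` for
`k ≫ 1` (all `k ≥ bound`). -/
structure CurvedAinf (F : Type*) [Field F] (A : Type*) [AddCommGroup A] [Module F A]
    (𝒜 : ℤ → Submodule F A) where
  isInternal : DirectSum.IsInternal 𝒜
  m : ∀ n : ℕ, GradedOp F A 𝒜 n (2 - (n : ℤ))
  bound : ℕ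
  m_bound : ∀ k, bound ≤ k → ∀ x, (m k).toFun x = 0
  curved : CurvedEqns 𝒜 m

/-- The expression `m(e^b x_1 e^b x_2 e^b ⋯ e^b x_n e^b)`: the sum over all `l ≥ n` and
all ways of inserting `l - n` copies of `b` between (and around) the ordered inputs
`x_1, …, x_n` of the values `m_l(b,…,b,x_1,b,…,b,x_2,…,b,x_n,b,…,b)`.  For `n = 0`
this is `m(e^b) = ∑_{k ≥ 0} m_k(b,…,b)`.  (The insertion patterns of the `x_i` into
`l` slots are parametrized by the `n`-element subsets `s` of `Fin l`, the `x_i`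
occupying the positions of `s` in increasing order.) -/
noncomputable def mDef (M : CurvedAinf F A 𝒜) (b : A) {n : ℕ} (x : Fin n → A) : A :=
  ∑ᶠ l : ℕ, ∑ s : Finset (Fin l),
    if h : s.card = n then
      (M.m l).toFun (fun j => if hj : j ∈ s then x ((s.orderIsoOfFin h).symm ⟨j, hj⟩) else b)
    else 0

/-- The sum of the parts of a composition before the `j`-th part. -/
def offsetSum {k : ℕ} (c : Fin k → ℕ) (j : Fin k) : ℕ :=
  ∑ j' : Fin k, if j' < j then c j' else 0

/-- The defining equations of a homomorphism of curved A∞-algebras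
`f : (A, m^{M1}) → (A, m^{M2})`, a family of graded maps `f_n : A^{⊗n} → A` of degree
`1 - n` (`n ≥ 0`): for all `n ≥ 0` and homogeneous `x_1, …, x_n`,
`∑_{n=r+s+t} (-1)^{δ(x_1,…,x_r)} f_{r+1+t}(x_1,…,x_r, m^{M1}_s(…), …, x_n)
  = ∑_{n=i_1+⋯+i_k} m^{M2}_k (f_{i_1}(x_1,…), …, f_{i_k}(…,x_n))`,
the right-hand compositions `(i_1, …, i_k)` of `n` into `k` parts `≥ 0` being
parametrized by `Finset.Nat.antidiagonalTuple k n`. -/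
def CurvedHomEqns (𝒜 : ℤ → Submodule F A) (M1 M2 : CurvedAinf F A 𝒜)
    (f : ∀ n : ℕ, GradedOp F A 𝒜 n (1 - (n : ℤ))) : Prop :=
  ∀ (n : ℕ) (dg : Fin n → ℤ) (x : Fin n → A), (∀ i, x i ∈ 𝒜 (dg i)) →
    (∑ r : Fin (n + 1), ∑ s : Fin (n + 1 - (r : ℕ)),
      sgn F (degSum dg (r : ℕ) - (r : ℕ)) •
        (f ((r : ℕ) + 1 + (n - ((r : ℕ) + (s : ℕ))))).toFun
          (splice x (r : ℕ) (s : ℕ) ((M1.m (s : ℕ)).toFun (blockFun x (r : ℕ) (s : ℕ)))))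
    = ∑ᶠ k : ℕ, ∑ c ∈ Finset.Nat.antidiagonalTuple k n,
        (M2.m k).toFun (fun j => (f (c j)).toFun (fun i => get x (offsetSum c j + (i : ℕ))))

end Ainf

namespace Ainf

variable {F : Type*} [Field F] {A : Type*} [AddCommGroup A] [Module F A]

/-- The Gerstenhaber bracket `[f, g]` of `f ∈ C^{n,k}(A,A)` and `g ∈ C^{m,l}(A,A)`,
evaluated on a tuple `x` which is homogeneous of degrees `dg`, following the Koszul
sign rule. -/
def bracketEval (𝒜 : ℤ → Submodule F A) {n m : ℕ} {k l : ℤ}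
    (f : GradedOp F A 𝒜 n k) (g : GradedOp F A 𝒜 m l)
    (dg : Fin (n + m - 1) → ℤ) (x : Fin (n + m - 1) → A) : A :=
  (∑ i : Fin n,
      sgn F ((((n : ℤ) - 1) * ((m : ℤ) - 1) + ((n : ℤ) - 1) * l + ((i : ℕ) : ℤ) * ((m : ℤ) - 1))
          + l * degSum dg (i : ℕ)) •
        f.toFun (splice x (i : ℕ) m (g.toFun (blockFun x (i : ℕ) m))))
  - sgn F (((n : ℤ) + k - 1) * ((m : ℤ) + l - 1)) •
    ∑ i : Fin m,
      sgn F ((((m : ℤ) - 1) * ((n : ℤ) - 1) + ((m : ℤ) - 1) * k + ((i : ℕ) : ℤ) * ((n : ℤ) - 1))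
          + k * degSum dg (i : ℕ)) •
        g.toFun (splice x (i : ℕ) n (f.toFun (blockFun x (i : ℕ) n)))

end Ainf

/-!
Bracketing with a unary cochain `g` of degree `0` involves no signs:
`[f, g] = ∑ᵢ f(x₁, …, g xᵢ, …, xₙ) - g (f x)`. If `g` acts on `𝒜 d` by a scalar `w d`, then `[f, g]`
is therefore `f` times the total weight of the inputs minus the weight of the output. For
`w d = 1 - d` and `f` of degree `k`, the input degrees cancel and the factor is `n - (1 - k)`,
which is `1` when `k = 2 - n`.
-/

namespace Ainf

variable {F : Type*} [Field F] {A : Type*} [AddCommGroup A] [Module F A] {N : ℕ}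

theorem sgn_zero : sgn F 0 = 1 :=
  zpow_zero _

theorem degSum_zero (dg : Fin N → ℤ) : degSum dg 0 = 0 := by
  simp only [degSum, Nat.not_lt_zero, if_false, Finset.sum_const_zero]

theorem get_val (x : Fin N → A) (i : Fin N) : get x i = x i :=
  dif_pos i.isLt

theorem blockFun_zero_self (x : Fin N → A) : blockFun x 0 N = x := by
  funext j
  rw [blockFun, zero_add, get_val]

theorem blockFun_one (x : Fin N → A) (i : Fin N) : blockFun x i 1 = fun _ => x i := by
  funext j
  rw [blockFun, Fin.val_eq_zero, add_zero, get_val]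

theorem splice_zero_fin_one (x : Fin N → A) (s : ℕ) (a : A) :
    (splice x 0 s a : Fin 1 → A) = fun _ => a := by
  funext j
  simp only [splice, Fin.val_eq_zero, lt_irrefl, if_false, if_true]

theorem splice_one (x : Fin N → A) (i : Fin N) (a : A) :
    (splice x i 1 a : Fin N → A) = Function.update x i a := by
  funext j
  simp only [splice, Function.update_apply, Fin.ext_iff, Nat.add_sub_cancel, get_val]
  split_ifs with hlt heq <;> first | rfl | omega

variable {𝒜 : ℤ → Submodule F A} {n : ℕ} {k : ℤ}

theorem bracketEval_unary_degree_zero (f : GradedOp F A 𝒜 n k) (g : GradedOp F A 𝒜 1 0)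
    (dg : Fin n → ℤ) (x : Fin n → A) :
    bracketEval 𝒜 f g dg x =
      (∑ i, f.toFun (Function.update x i (g.toFun fun _ => x i))) -
        g.toFun fun _ => f.toFun x := by
  have outer_terms (i : Fin n) :
      f.toFun (splice (N := n) x i 1 (g.toFun (blockFun (N := n) x i 1))) =
        f.toFun (Function.update x i (g.toFun fun _ => x i)) := by
    rw [blockFun_one, splice_one]
  have inner_term :
      g.toFun (splice (N := n) x 0 n (f.toFun (blockFun (N := n) x 0 n))) =
        g.toFun fun _ => f.toFun x := by
    rw [blockFun_zero_self, splice_zero_fin_one]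
  simp only [← outer_terms, ← inner_term, bracketEval, Nat.cast_one, sub_self, add_zero, mul_zero,
    zero_mul, sgn_zero, one_smul, Finset.univ_unique, Finset.sum_singleton, Fin.default_eq_zero,
    Fin.val_zero, Nat.cast_zero, degSum_zero]

theorem bracketEval_eq_smul_of_diagonal (f : GradedOp F A 𝒜 n k) (g : GradedOp F A 𝒜 1 0)
    (w : ℤ → F) (hg : ∀ (d : ℤ) (α : A), α ∈ 𝒜 d → g.toFun (fun _ => α) = w d • α)
    (dg : Fin n → ℤ) (x : Fin n → A) (hx : ∀ i, x i ∈ 𝒜 (dg i)) :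
    bracketEval 𝒜 f g dg x = ((∑ i, w (dg i)) - w ((∑ i, dg i) + k)) • f.toFun x := by
  have input_weight (i : Fin n) :
      f.toFun (Function.update x i (g.toFun fun _ => x i)) = w (dg i) • f.toFun x := by
    rw [hg _ _ (hx i), MultilinearMap.map_update_smul, Function.update_eq_self]
  rw [bracketEval_unary_degree_zero, hg _ _ (f.map_graded dg x hx), sub_smul, Finset.sum_smul]
  simp only [input_weight]

end Ainf

open Ainf in
theorem curved_bracket_with_id_sub_euler_general {F : Type*} [Field F] {A : Type*}
    [AddCommGroup A] [Module F A] {𝒜 : ℤ → Submodule F A} {n : ℕ} {k : ℤ}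
    (f : GradedOp F A 𝒜 n k) (G : GradedOp F A 𝒜 1 0)
    (hG : ∀ (d : ℤ) (α : A), α ∈ 𝒜 d → G.toFun (fun _ => α) = α - d • α)
    (dg : Fin n → ℤ) (x : Fin n → A) (hx : ∀ i, x i ∈ 𝒜 (dg i)) :
    bracketEval 𝒜 f G dg x = ((n : ℤ) + k - 1) • f.toFun x := by
  have hG_diagonal (d : ℤ) (α : A) (hα : α ∈ 𝒜 d) :
      G.toFun (fun _ => α) = ((1 - d : ℤ) : F) • α := by
    rw [hG d α hα, Int.cast_smul_eq_zsmul, sub_smul, one_smul]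
  have total_weight : (∑ i, (1 - dg i)) - (1 - ((∑ i, dg i) + k)) = (n : ℤ) + k - 1 := by
    rw [Finset.sum_sub_distrib, Fin.sum_const, nsmul_one]
    ring
  rw [bracketEval_eq_smul_of_diagonal f G (fun d => ((1 - d : ℤ) : F)) hG_diagonal dg x hx,
    ← total_weight, ← Int.cast_smul_eq_zsmul F]
  push_cast
  rfl

open Ainf in
/-- For any curved A∞-algebra `(A, m)` (now including the arity-`0`
component `m_0`), the identity `[m, I - E] = m` holds for the Gerstenhaber bracket,
where `I` is the identity map and `E` the euler derivation element (so
`(I - E)(α) = α - deg(α) • α` on homogeneous `α`): componentwise,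
`[m_k, I - E] = m_k` for every arity `k ≥ 0`, evaluated on homogeneous tuples.
In particular `[m] = 0` in the Hochschild cohomology `HH^2(A,A)` of the curved
A∞-algebra. -/
theorem curved_bracket_with_id_sub_euler {F : Type*} [Field F] {A : Type*}
    [AddCommGroup A] [Module F A] (𝒜 : ℤ → Submodule F A) (M : CurvedAinf F A 𝒜)
    (G : GradedOp F A 𝒜 1 0)
    (hG : ∀ (d : ℤ) (α : A), α ∈ 𝒜 d → G.toFun (fun _ => α) = α - d • α) :
    ∀ (k : ℕ) (dg : Fin k → ℤ) (x : Fin k → A), (∀ i, x i ∈ 𝒜 (dg i)) →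
      bracketEval 𝒜 (M.m k) G dg x = (M.m k).toFun x := by
  intro k dg x hx
  rw [curved_bracket_with_id_sub_euler_general (M.m k) G hG dg x hx,
    show (k : ℤ) + (2 - k) - 1 = 1 by ring, one_smul]
end

section
/- Let (A,m) be a curved A∞-algebra. Then (A,m) can be deformed through an almost identity endomorphism into a curved A∞-algebra (A, m̃) satisfying m̃_1 ∘ m̃_1 = 0 if and only if the obstruction equation m(e^b m(e^b) e^b x e^b) = (−1)^{|x|} m(e^b x e^b m(e^b) e^b), for all homogeneous x ∈ A, has a solution b ∈ A^1. -/
open scoped BigOperators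

/-!
Deforming through `f` with `f₁ = id` and `fₙ = 0` for `n ≥ 2` forces
`m̃ₙ(x₁, …, xₙ) = m(e^b x₁ e^b ⋯ e^b xₙ e^b)` with `b = f₀(1)`, as only compositions with all parts
at most `1` contribute to the homomorphism equations. Conversely these operations satisfy the
`A∞`-equations for every `b ∈ A¹`: since `e^b` is grouplike for deconcatenation and `b` does not
affect the Koszul signs, the `n`-th equation of `m̃` is the sum of the equations of `m` over all
words obtained from `x₁ ⋯ xₙ` by inserting copies of `b`. The equation of `m̃` for `n = 1` reads
`m̃₁(m̃₁(x)) + m̃₂(m̃₀, x) = (-1)^|x| m̃₂(x, m̃₀)`, so `m̃₁ ∘ m̃₁ = 0` is the obstruction equation.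
-/

namespace Ainf

section Words

variable {X B : Type*}

/-- The sum of `G P Q` over all factorizations `L = P ++ Q`, i.e. `G` evaluated on the
deconcatenation coproduct of `L`. -/
def splitSum [AddCommMonoid B] (L : List X) (G : List X → List X → B) : B :=
  ∑ r ∈ Finset.range (L.length + 1), G (L.take r) (L.drop r)

/-- The words of length less than `N` obtained from `L = [x₁, …, xₙ]` by inserting copies of `b`
anywhere, with multiplicity. This truncates the formal sum `e^b x₁ e^b ⋯ xₙ e^b`. -/
def insertions (b : X) : ℕ → List X → Multiset (List X)
  | 0, _ => 0
  | N + 1, [] => [] ::ₘ (insertions b N []).map (List.cons b)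
  | N + 1, x :: L =>
      (insertions b N L).map (List.cons x) + (insertions b N (x :: L)).map (List.cons b)

/-- The truncated value of `φ` on the formal sum `e^b x₁ e^b ⋯ xₙ e^b`, where
`L = [x₁, …, xₙ]`. -/
def insertionSum [AddCommMonoid B] (b : X) (N : ℕ) (L : List X) (φ : List X → B) : B :=
  ((insertions b N L).map φ).sum

theorem exists_perm_replicate_append_of_mem_insertions {b : X} {N : ℕ} {L W : List X}
    (hW : W ∈ insertions b N L) : ∃ k, W.Perm (List.replicate k b ++ L) := by
  fun_induction insertions b N L generalizing W with
  | case1 => exact absurd hW (Multiset.notMem_zero W)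
  | case2 N ih =>
    rw [Multiset.mem_cons, Multiset.mem_map] at hW
    obtain rfl | ⟨V, hV, rfl⟩ := hW
    · exact ⟨0, .refl _⟩
    · obtain ⟨k, hk⟩ := ih hV
      exact ⟨k + 1, hk.cons b⟩
  | case3 N x L ihx ihb =>
    rw [Multiset.mem_add, Multiset.mem_map, Multiset.mem_map] at hW
    obtain ⟨V, hV, rfl⟩ | ⟨V, hV, rfl⟩ := hW
    · obtain ⟨k, hk⟩ := ihx hV
      exact ⟨k, (hk.cons x).trans List.perm_middle.symm⟩
    · obtain ⟨k, hk⟩ := ihb hV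
      exact ⟨k + 1, hk.cons b⟩

theorem eq_or_mem_of_mem_insertions {b : X} {N : ℕ} {L W : List X} (hW : W ∈ insertions b N L)
    {w : X} (hw : w ∈ W) : w = b ∨ w ∈ L := by
  obtain ⟨k, hk⟩ := exists_perm_replicate_append_of_mem_insertions hW
  rw [hk.mem_iff, List.mem_append] at hw
  exact hw.imp_left List.eq_of_mem_replicate

theorem sum_map_of_mem_insertions [AddCommMonoid B] {b : X} {wt : X → B} (hb : wt b = 0) {N : ℕ}
    {L W : List X} (hW : W ∈ insertions b N L) : (W.map wt).sum = (L.map wt).sum := by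
  obtain ⟨k, hk⟩ := exists_perm_replicate_append_of_mem_insertions hW
  rw [(hk.map wt).sum_eq]
  simp [hb]

theorem insertions_eq_zero_of_le_length (b : X) {N : ℕ} {L : List X} (h : N ≤ L.length) :
    insertions b N L = 0 := by
  fun_induction insertions b N L with
  | case1 => rfl
  | case2 N => exact absurd h (by simp)
  | case3 N x L ihx ihb =>
    rw [List.length_cons] at h ihb
    rw [ihx (by omega), ihb (by omega), Multiset.map_zero, Multiset.map_zero, add_zero]

variable [AddCommMonoid B]

theorem splitSum_nil (G : List X → List X → B) : splitSum [] G = G [] [] := by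
  simp [splitSum]

theorem splitSum_cons (x : X) (L : List X) (G : List X → List X → B) :
    splitSum (x :: L) G = splitSum L (fun P Q => G (x :: P) Q) + G [] (x :: L) := by
  simp [splitSum, Finset.sum_range_succ' _ (L.length + 1)]

theorem splitSum_add (L : List X) (G H : List X → List X → B) :
    splitSum L (fun P Q => G P Q + H P Q) = splitSum L G + splitSum L H :=
  Finset.sum_add_distrib

theorem splitSum_eq_zero {L : List X} {G : List X → List X → B}
    (h : ∀ P Q, P.length + Q.length = L.length → G P Q = 0) : splitSum L G = 0 :=
  Finset.sum_eq_zero fun r _ => h _ _ (by rw [← List.length_append, List.take_append_drop])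

theorem insertionSum_zero (b : X) (L : List X) (φ : List X → B) : insertionSum b 0 L φ = 0 := by
  simp [insertionSum, insertions]

theorem insertionSum_succ_nil (b : X) (N : ℕ) (φ : List X → B) :
    insertionSum b (N + 1) [] φ = φ [] + insertionSum b N [] (fun W => φ (b :: W)) := by
  simp [insertionSum, insertions]

theorem insertionSum_succ_cons (b x : X) (N : ℕ) (L : List X) (φ : List X → B) :
    insertionSum b (N + 1) (x :: L) φ = insertionSum b N L (fun W => φ (x :: W))
      + insertionSum b N (x :: L) (fun W => φ (b :: W)) := by
  simp [insertionSum, insertions]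

theorem insertionSum_add (b : X) (N : ℕ) (L : List X) (φ ψ : List X → B) :
    insertionSum b N L (fun W => φ W + ψ W) = insertionSum b N L φ + insertionSum b N L ψ :=
  Multiset.sum_map_add

theorem insertionSum_congr {b : X} {N : ℕ} {L : List X} {φ ψ : List X → B}
    (h : ∀ W ∈ insertions b N L, φ W = ψ W) : insertionSum b N L φ = insertionSum b N L ψ := by
  rw [insertionSum, Multiset.map_congr rfl h, insertionSum]

theorem map_insertionSum {C : Type*} [AddCommMonoid C] (g : B →+ C) (b : X) (N : ℕ) (L : List X)
    (φ : List X → B) : g (insertionSum b N L φ) = insertionSum b N L (fun W => g (φ W)) := by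
  simp [insertionSum, map_multiset_sum]

theorem insertionSum_comm (b : X) (N K : ℕ) (L L' : List X) (G : List X → List X → B) :
    insertionSum b N L (fun W => insertionSum b K L' (fun V => G W V))
      = insertionSum b K L' (fun V => insertionSum b N L (fun W => G W V)) :=
  Multiset.sum_map_sum_map _ _

theorem insertionSum_splitSum_comm (b : X) (N : ℕ) (L L' : List X)
    (G : List X → List X → List X → B) :
    insertionSum b N L (fun W => splitSum L' (G W))
      = splitSum L' (fun P Q => insertionSum b N L (fun W => G W P Q)) :=
  Multiset.sum_map_sum

theorem insertionSum_eq_of_le {b : X} {N K : ℕ} (hNK : N ≤ K) {L : List X} {φ : List X → B}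
    (h : ∀ W, N ≤ W.length → φ W = 0) : insertionSum b N L φ = insertionSum b K L φ := by
  induction N generalizing K L φ with
  | zero => simp [insertionSum, h]
  | succ N ih =>
    obtain ⟨K, rfl⟩ : ∃ K', K = K' + 1 := ⟨K - 1, by omega⟩
    have shift (x : X) (L : List X) :
        insertionSum b N L (fun W => φ (x :: W)) = insertionSum b K L (fun W => φ (x :: W)) :=
      ih (by omega) fun W hW => h _ (by simpa using hW)
    cases L <;> simp only [insertionSum_succ_nil, insertionSum_succ_cons, shift]

theorem insertionSum_append_cons {b : X} {N K : ℕ} (hNK : N ≤ K) (P R : List X) (y : X)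
    {φ : List X → B} (h : ∀ W, N ≤ W.length → φ W = 0) :
    insertionSum b N (P ++ y :: R) φ
      = insertionSum b N P (fun W => insertionSum b K R (fun V => φ (W ++ y :: V))) := by
  induction N generalizing P φ with
  | zero => simp only [insertionSum_zero]
  | succ N ih =>
    have shift (x : X) (W : List X) (hW : N ≤ W.length) : φ (x :: W) = 0 :=
      h _ (by simpa using hW)
    have ih_b (P : List X) := ih (by omega) P (shift b)
    cases P with
    | nil =>
      rw [List.nil_append, insertionSum_succ_cons, insertionSum_succ_nil,
        insertionSum_eq_of_le (by omega : N ≤ K) (shift y)]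
      exact congrArg _ (ih_b [])
    | cons x P =>
      rw [List.cons_append, insertionSum_succ_cons, insertionSum_succ_cons,
        ih (by omega) P (shift x)]
      exact congrArg _ (ih_b (x :: P))

/-- This is `Δ(e^b) = e^b ⊗ e^b` for the deconcatenation coproduct `Δ`, truncated. -/
theorem splitSum_insertionSum {b : X} {N K : ℕ} (hNK : N ≤ K) (L : List X)
    {G : List X → List X → B} (h : ∀ P Q, N ≤ P.length + Q.length → G P Q = 0) :
    splitSum L (fun P Q => insertionSum b N P (fun W => insertionSum b K Q (G W)))
      = insertionSum b N L (fun W => splitSum W G) := by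
  induction N generalizing L G with
  | zero => simp [insertionSum_zero, splitSum]
  | succ N ih =>
    have ih_cons (x : X) (L : List X) := ih (by omega) L (G := fun P Q => G (x :: P) Q)
      fun P Q hPQ => h _ _ (by simp only [List.length_cons]; omega)
    have empty_prefix (L : List X) : insertionSum b K L (G []) = insertionSum b (N + 1) L (G []) :=
      (insertionSum_eq_of_le hNK fun W hW => h _ _ (by simpa using hW)).symm
    cases L with
    | nil =>
      have ih_b := ih_cons b []
      rw [splitSum_nil] at ih_b ⊢
      simp only [insertionSum_succ_nil, splitSum_nil, splitSum_cons, insertionSum_add, ← ih_b,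
        empty_prefix]
      abel
    | cons x L =>
      have ih_b := ih_cons b (x :: L)
      rw [splitSum_cons] at ih_b ⊢
      simp only [insertionSum_succ_nil, insertionSum_succ_cons, splitSum_cons, splitSum_add,
        insertionSum_add, ← ih_cons x L, ← ih_b, empty_prefix]
      abel

end Words

section Patterns

variable {X B : Type*}

/-- The word of length `l` carrying the letters of `L`, in order, at the positions in `s`, and `b`
at all other positions. -/
def patternWord (b : X) (L : List X) {l : ℕ} (s : Finset (Fin l)) : List X :=
  List.ofFn fun j => if j ∈ s then L.getD (s.filter (· < j)).card b else b

theorem sum_finset_fin_succ [AddCommMonoid B] (l : ℕ) (f : Finset (Fin (l + 1)) → B) :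
    ∑ s, f s = ∑ t : Finset (Fin l), f (t.map (Fin.succEmb l))
      + ∑ t : Finset (Fin l), f (insert 0 (t.map (Fin.succEmb l))) := by
  have powerset_map : ((Finset.univ : Finset (Fin l)).map (Fin.succEmb l)).powerset
      = Finset.univ.map (Finset.mapEmbedding (Fin.succEmb l)).toEmbedding := by
    ext s
    simp [Finset.subset_map_iff, Finset.mapEmbedding_apply, eq_comm]
  have univ_eq : (Finset.univ : Finset (Fin (l + 1)))
      = insert 0 (Finset.univ.map (Fin.succEmb l)) := by
    rw [Fin.univ_succ, Finset.cons_eq_insert]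
    rfl
  rw [← Finset.powerset_univ, univ_eq, Finset.sum_powerset_insert (by simp), powerset_map,
    Finset.sum_map, Finset.sum_map]
  rfl

theorem patternWord_map_succ (b : X) (L : List X) {l : ℕ} (t : Finset (Fin l)) :
    patternWord b L (t.map (Fin.succEmb l)) = b :: patternWord b L t := by
  simp [patternWord, List.ofFn_succ, Finset.filter_map, Function.comp_def]

theorem patternWord_insert_zero (b x : X) (L : List X) {l : ℕ} (t : Finset (Fin l)) :
    patternWord b (x :: L) (insert 0 (t.map (Fin.succEmb l))) = x :: patternWord b L t := by
  simp [patternWord, List.ofFn_succ, Finset.filter_insert, Finset.filter_map, Function.comp_def]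

theorem sum_patternWord [AddCommMonoid B] (b : X) (N : ℕ) (L : List X) (φ : List X → B) :
    ∑ l ∈ Finset.range N, ∑ s : Finset (Fin l),
      (if s.card = L.length then φ (patternWord b L s) else 0) = insertionSum b N L φ := by
  induction N generalizing L φ with
  | zero => simp [insertionSum_zero]
  | succ N ih =>
    have card_insert {l : ℕ} (t : Finset (Fin l)) :
        (insert 0 (t.map (Fin.succEmb l))).card = t.card + 1 := by
      simp
    have default_eq : (default : Finset (Fin 0)) = ∅ := Subsingleton.elim _ _
    simp only [Finset.sum_range_succ' _ N, sum_finset_fin_succ, Finset.sum_add_distrib,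
      Finset.card_map, card_insert, patternWord_map_succ]
    cases L with
    | nil =>
      rw [insertionSum_succ_nil, ← ih]
      simp [patternWord, default_eq, add_comm]
    | cons x L =>
      simp only [patternWord_insert_zero, List.length_cons, add_left_inj]
      rw [insertionSum_succ_cons, ← ih, ← ih]
      simp [default_eq, add_comm]

theorem coe_orderIsoOfFin_symm_eq_card_filter_lt {l n : ℕ} (s : Finset (Fin l)) (h : s.card = n)
    (j : s) : ((s.orderIsoOfFin h).symm j : ℕ) = (s.filter (· < (j : Fin l))).card := by
  obtain ⟨k, rfl⟩ := (s.orderIsoOfFin h).surjective j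
  have filter_lt : s.filter (· < s.orderEmbOfFin h k)
      = (Finset.Iio k).map (s.orderEmbOfFin h).toEmbedding := by
    conv_lhs => arg 2; rw [← s.map_orderEmbOfFin_univ h]
    rw [Finset.filter_map]
    congr 1
    ext i
    simp
  rw [OrderIso.symm_apply_apply, Finset.coe_orderIsoOfFin_apply, filter_lt, Finset.card_map,
    Fin.card_Iio]

theorem card_filter_lt_lt_card {l : ℕ} {s : Finset (Fin l)} {j : Fin l} (hj : j ∈ s) :
    (s.filter (· < j)).card < s.card :=
  Finset.card_lt_card (Finset.filter_ssubset.2 ⟨j, hj, lt_irrefl j⟩)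

theorem offsetSum_indicator {k : ℕ} (s : Finset (Fin k)) (j : Fin k) :
    offsetSum (fun i => if i ∈ s then 1 else 0) j = (s.filter (· < j)).card := by
  simp only [offsetSum, ← Finset.sum_filter, ← Finset.card_eq_sum_ones]
  congr 1
  ext i
  simp [and_comm]

theorem sum_antidiagonalTuple_eq_sum_finset [AddCommMonoid B] {k : ℕ} (n : ℕ)
    {G : (Fin k → ℕ) → B} (hG : ∀ c j, 2 ≤ c j → G c = 0) :
    ∑ c ∈ Finset.Nat.antidiagonalTuple k n, G c
      = ∑ s : Finset (Fin k), if s.card = n then G (fun j => if j ∈ s then 1 else 0) else 0 := by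
  rw [← Finset.sum_filter]
  symm
  refine Finset.sum_of_injOn (fun s j => if j ∈ s then 1 else 0) ?_ ?_ ?_ fun s _ => rfl
  · intro s _ t _ hst
    ext j
    simpa using congrArg (· = 1) (congrFun hst j)
  · intro s hs
    simpa [Finset.Nat.mem_antidiagonalTuple] using hs
  · intro c hc hc_image
    by_contra hGc
    have c_le_one (j : Fin k) : c j ≤ 1 := by
      by_contra! hj
      exact hGc (hG c j hj)
    have c_eq : (fun j => if j ∈ Finset.univ.filter (c · = 1) then 1 else 0) = c := by
      funext j
      have := c_le_one j
      simp only [Finset.mem_filter, Finset.mem_univ, true_and]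
      split_ifs <;> omega
    refine hc_image ⟨Finset.univ.filter (c · = 1), ?_, c_eq⟩
    rw [← c_eq, Finset.Nat.mem_antidiagonalTuple] at hc
    simpa using hc

end Patterns

section Stasheff

variable {F : Type*} [Field F] {A : Type*}

/-- The Koszul sign `(-1)^{δ(x₁, …, xᵣ)}` of a word of elements paired with their degrees. -/
def koszulSign (F : Type*) [Field F] (P : List (ℤ × A)) : F :=
  sgn F (P.map fun p => p.1 - 1).sum

theorem sum_map_take_ofFn {n : ℕ} (dg : Fin n → ℤ) (x : Fin n → A) {r : ℕ} (hr : r ≤ n) :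
    (((List.ofFn fun i => (dg i, x i)).take r).map fun p => p.1 - 1).sum = degSum dg r - r := by
  induction n generalizing r with
  | zero => simp_all [degSum]
  | succ n ih =>
    cases r with
    | zero => simp [degSum]
    | succ r =>
      have ih_tail := ih (fun i => dg i.succ) (fun i => x i.succ) (by omega : r ≤ n)
      rw [List.ofFn_succ, List.take_succ_cons, List.map_cons, List.sum_cons, ih_tail]
      simp only [degSum, Fin.sum_univ_succ, Fin.val_zero, Fin.val_succ, Nat.succ_pos, if_true,
        add_lt_add_iff_right]
      push_cast
      ring

variable [AddCommGroup A] [Module F A]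

/-- The left side of the `A∞`-equation for operations `e` on words of elements paired with their
degrees. The inner value `e Q` is given the dummy degree `0`, as no sign sees it. -/
def stasheffSum (F : Type*) [Field F] [Module F A] (e : List (ℤ × A) → A) (L : List (ℤ × A)) : A :=
  splitSum L fun P T => splitSum T fun Q R => koszulSign F P • e (P ++ (0, e Q) :: R)

theorem smul_insertionSum_append_cons (c : F) {e : List (ℤ × A) → A} {b : ℤ × A} {N K : ℕ}
    (hNK : N ≤ K) (he : ∀ W, N ≤ W.length → e W = 0)
    (hlin : ∀ P R, IsLinearMap F fun y => e (P ++ (0, y) :: R)) (P Q R : List (ℤ × A)) :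
    c • insertionSum b N (P ++ (0, insertionSum b N Q e) :: R) e
      = insertionSum b K P fun W => insertionSum b K Q fun U => insertionSum b K R fun V =>
          c • e (W ++ (0, e U) :: V) := by
  have slot (W V : List (ℤ × A)) : c • e (W ++ (0, insertionSum b K Q e) :: V)
      = insertionSum b K Q fun U => c • e (W ++ (0, e U) :: V) :=
    map_insertionSum (c • (hlin W V).mk' _).toAddMonoidHom b K Q e
  have smul_insertionSum (L : List (ℤ × A)) (φ : List (ℤ × A) → A) :
      c • insertionSum b K L φ = insertionSum b K L fun W => c • φ W :=
    map_insertionSum (DistribSMul.toAddMonoidHom A c) b K L φ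
  rw [insertionSum_eq_of_le hNK he (L := Q), insertionSum_eq_of_le hNK he,
    insertionSum_append_cons le_rfl _ _ _ fun W hW => he W (hNK.trans hW)]
  simp only [smul_insertionSum, slot, insertionSum_comm b K K R Q]

/-- A letter of degree `1` does not contribute to the Koszul sign. The bound `2 * N` leaves room for
the two nested operations, each of which vanishes on words of length at least `N`. -/
theorem stasheffSum_insertionSum {e : List (ℤ × A) → A} {b : ℤ × A} (hb : b.1 = 1) {N : ℕ}
    (he : ∀ W, N ≤ W.length → e W = 0)
    (hlin : ∀ P R, IsLinearMap F fun y => e (P ++ (0, y) :: R)) (L : List (ℤ × A)) :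
    stasheffSum F (fun W => insertionSum b N W e) L
      = insertionSum b (2 * N) L (stasheffSum F e) := by
  let term (P Q R : List (ℤ × A)) : A := koszulSign F P • e (P ++ (0, e Q) :: R)
  have term_eq_zero (P Q R : List (ℤ × A)) (h : 2 * N ≤ P.length + Q.length + R.length) :
      term P Q R = 0 := by
    rcases le_or_gt N Q.length with hQ | hQ
    · simp only [term, he Q hQ, (hlin P R).map_zero, smul_zero]
    · have h_length : N ≤ (P ++ (0, e Q) :: R).length := by
        simp only [List.length_append, List.length_cons]
        omega
      simp only [term, he _ h_length, smul_zero]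
  have koszulSign_eq {P W : List (ℤ × A)} (hW : W ∈ insertions b (2 * N) P) :
      koszulSign F W = koszulSign F P := by
    rw [koszulSign, sum_map_of_mem_insertions (by simp [hb]) hW, koszulSign]
  have expand (P Q R : List (ℤ × A)) :
      koszulSign F P • insertionSum b N (P ++ (0, insertionSum b N Q e) :: R) e
        = insertionSum b (2 * N) P fun W => insertionSum b (2 * N) Q fun U =>
            insertionSum b (2 * N) R (term W U) := by
    rw [smul_insertionSum_append_cons _ (by omega : N ≤ 2 * N) he hlin]
    exact insertionSum_congr fun W hW => by simp only [term, koszulSign_eq hW]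
  have merge_inner (W T : List (ℤ × A)) :
      splitSum T (fun Q R => insertionSum b (2 * N) Q fun U =>
        insertionSum b (2 * N) R (term W U))
      = insertionSum b (2 * N) T fun T' => splitSum T' (term W) :=
    splitSum_insertionSum le_rfl T fun U V h => term_eq_zero W U V (by omega)
  simp only [stasheffSum, expand, ← insertionSum_splitSum_comm, merge_inner]
  exact splitSum_insertionSum le_rfl L fun W T h =>
    splitSum_eq_zero fun U V hUV => term_eq_zero W U V (by omega)

end Stasheff

section Operations

variable {F : Type*} [Field F] {A : Type*} [AddCommGroup A] [Module F A]
  {𝒜 : ℤ → Submodule F A} {deg : ℕ → ℤ}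

theorem apply_of_arity_eq_zero (m : ∀ n : ℕ, GradedOp F A 𝒜 n (deg n)) {n : ℕ} (hn : n = 0)
    (x : Fin n → A) : (m n).toFun x = (m 0).toFun (fun i : Fin 0 => i.elim0) := by
  subst hn
  exact (m 0).toFun.congr_arg (funext nofun)

theorem nullary_mem (m : ∀ n : ℕ, GradedOp F A 𝒜 n (deg n)) :
    (m 0).toFun (fun i : Fin 0 => i.elim0) ∈ 𝒜 (deg 0) := by
  simpa using (m 0).map_graded (fun i => i.elim0) (fun i => i.elim0) nofun

/-- The operation of arity `W.length` applied to the letters of `W`, which are elements paired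
with their degrees. -/
def evalWord (m : ∀ n : ℕ, GradedOp F A 𝒜 n (deg n)) (W : List (ℤ × A)) : A :=
  (m W.length).toFun fun i => (W.get i).2

theorem evalWord_eq (m : ∀ n : ℕ, GradedOp F A 𝒜 n (deg n)) {W : List (ℤ × A)} {k : ℕ}
    (hk : W.length = k) {t : Fin k → A}
    (h : ∀ (i : ℕ) (hW : i < W.length) (hi : i < k), (W[i]).2 = t ⟨i, hi⟩) :
    evalWord m W = (m k).toFun t := by
  subst hk
  exact (m W.length).toFun.congr_arg (funext fun i => h i i.2 i.2)

theorem evalWord_ofFn (m : ∀ n : ℕ, GradedOp F A 𝒜 n (deg n)) {k : ℕ} (t : Fin k → ℤ × A) :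
    evalWord m (List.ofFn t) = (m k).toFun fun i => (t i).2 :=
  evalWord_eq m List.length_ofFn fun i hW hi => by rw [List.getElem_ofFn]

theorem isLinearMap_evalWord (m : ∀ n : ℕ, GradedOp F A 𝒜 n (deg n)) (P R : List (ℤ × A)) :
    IsLinearMap F fun y => evalWord m (P ++ (0, y) :: R) := by
  let slot : Fin (P.length + (R.length + 1)) := ⟨P.length, by omega⟩
  let others (i : Fin (P.length + (R.length + 1))) : A := ((P ++ (0, 0) :: R)[(i : ℕ)]'(by simp)).2
  have evalWord_eq_toLinearMap (y : A) : evalWord m (P ++ (0, y) :: R)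
      = (m (P.length + (R.length + 1))).toFun.toLinearMap others slot y := by
    refine evalWord_eq m (by simp) fun i _ _ => ?_
    rw [Function.update_apply]
    simp only [slot, others, Fin.mk.injEq]
    grind
  simp only [evalWord_eq_toLinearMap]
  exact LinearMap.isLinear _

theorem evalWord_mem (m : ∀ n : ℕ, GradedOp F A 𝒜 n (deg n)) {W : List (ℤ × A)}
    (hW : ∀ w ∈ W, w.2 ∈ 𝒜 w.1) : evalWord m W ∈ 𝒜 ((W.map Prod.fst).sum + deg W.length) := by
  have h_sum : (W.map Prod.fst).sum = ∑ i : Fin W.length, (W.get i).1 := by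
    rw [← List.sum_ofFn]
    congr 1
    apply List.ext_getElem <;> simp
  rw [h_sum]
  exact (m W.length).map_graded _ _ fun i => hW _ (W.get_mem i)

theorem evalWord_take_drop_ofFn (m : ∀ n : ℕ, GradedOp F A 𝒜 n (deg n)) {n : ℕ} (dg : Fin n → ℤ)
    (x : Fin n → A) {r s : ℕ} (h : r + s ≤ n) :
    evalWord m (((List.ofFn fun i => (dg i, x i)).drop r).take s)
      = (m s).toFun (blockFun x r s) := by
  have h_length : (((List.ofFn fun i => (dg i, x i)).drop r).take s).length = s := by
    simp only [List.length_take, List.length_drop, List.length_ofFn]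
    omega
  refine evalWord_eq m h_length fun i hW hi => ?_
  simp [blockFun, get, show r + i < n by omega]

theorem evalWord_splice (m : ∀ n : ℕ, GradedOp F A 𝒜 n (deg n)) {n : ℕ} (dg : Fin n → ℤ)
    (x : Fin n → A) (a : A) {r s : ℕ} (h : r + s ≤ n) :
    evalWord m ((List.ofFn fun i => (dg i, x i)).take r ++
        (0, a) :: ((List.ofFn fun i => (dg i, x i)).drop r).drop s)
      = (m (r + 1 + (n - (r + s)))).toFun (splice x r s a) := by
  refine evalWord_eq m ?_ fun i hW hi => ?_
  · simp only [List.length_append, List.length_take, List.length_cons, List.length_drop,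
      List.length_ofFn]
    omega
  simp only [splice, get]
  split_ifs <;> grind

theorem sum_splice_eq_stasheffSum (m : ∀ n : ℕ, GradedOp F A 𝒜 n (deg n)) {n : ℕ}
    (dg : Fin n → ℤ) (x : Fin n → A) :
    (∑ r : Fin (n + 1), ∑ s : Fin (n + 1 - (r : ℕ)), sgn F (degSum dg r - (r : ℕ)) •
        (m ((r : ℕ) + 1 + (n - ((r : ℕ) + (s : ℕ))))).toFun
          (splice x r s ((m s).toFun (blockFun x r s))))
      = stasheffSum F (evalWord m) (List.ofFn fun i => (dg i, x i)) := by
  rw [stasheffSum, splitSum, List.length_ofFn, Finset.sum_range]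
  refine Finset.sum_congr rfl fun r _ => ?_
  rw [splitSum, List.length_drop, List.length_ofFn, show n - (r : ℕ) + 1 = n + 1 - r by omega,
    Finset.sum_range]
  refine Finset.sum_congr rfl fun s _ => ?_
  have hrs : (r : ℕ) + s ≤ n := by omega
  rw [koszulSign, sum_map_take_ofFn dg x (by omega), evalWord_take_drop_ofFn m dg x hrs,
    evalWord_splice m dg x _ hrs]

theorem curvedEqns_iff_stasheffSum_eq_zero (m : ∀ n : ℕ, GradedOp F A 𝒜 n (2 - (n : ℤ))) :
    CurvedEqns 𝒜 m ↔
      ∀ L : List (ℤ × A), (∀ w ∈ L, w.2 ∈ 𝒜 w.1) → stasheffSum F (evalWord m) L = 0 := by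
  simp only [CurvedEqns, sum_splice_eq_stasheffSum]
  refine ⟨fun h L hL => ?_, fun h n dg x hx => h _ ?_⟩
  · simpa using h L.length (fun i => (L.get i).1) _ fun i => hL _ (L.get_mem i)
  · simpa [List.mem_ofFn] using hx

end Operations

section Deformation

variable {F : Type*} [Field F] {A : Type*} [AddCommGroup A] [Module F A]
  {𝒜 : ℤ → Submodule F A}

theorem mDef_eq_sum_range (M : CurvedAinf F A 𝒜) (b : A) {n : ℕ} (x : Fin n → A) :
    mDef M b x = ∑ l ∈ Finset.range M.bound, ∑ s : Finset (Fin l),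
      if h : s.card = n then
        (M.m l).toFun fun j => if hj : j ∈ s then x ((s.orderIsoOfFin h).symm ⟨j, hj⟩) else b
      else 0 := by
  refine finsum_eq_sum_of_support_subset _ fun l hl => ?_
  by_contra h_bound
  refine hl (Finset.sum_eq_zero fun s _ => ?_)
  simp only [M.m_bound l (by simpa using h_bound), dite_eq_ite, ite_self]

theorem evalWord_patternWord {deg : ℕ → ℤ} (m : ∀ n : ℕ, GradedOp F A 𝒜 n (deg n)) (b : ℤ × A)
    {n l : ℕ} (dg : Fin n → ℤ) (x : Fin n → A) (s : Finset (Fin l)) (h : s.card = n) :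
    evalWord m (patternWord b (List.ofFn fun i => (dg i, x i)) s)
      = (m l).toFun fun j =>
          if hj : j ∈ s then x ((s.orderIsoOfFin h).symm ⟨j, hj⟩) else b.2 := by
  rw [patternWord, evalWord_ofFn]
  congr 1
  funext j
  by_cases hj : j ∈ s
  · have h_lt : (s.filter (· < j)).card < n := h ▸ card_filter_lt_lt_card hj
    rw [if_pos hj, dif_pos hj, List.getD_eq_getElem _ _ (by simpa using h_lt), List.getElem_ofFn]
    exact congrArg x (Fin.ext (coe_orderIsoOfFin_symm_eq_card_filter_lt s h ⟨j, hj⟩).symm)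
  · rw [if_neg hj, dif_neg hj]

theorem mDef_eq_insertionSum (M : CurvedAinf F A 𝒜) (b : A) {n : ℕ} (dg : Fin n → ℤ)
    (x : Fin n → A) : mDef M b x
      = insertionSum (1, b) M.bound (List.ofFn fun i => (dg i, x i)) (evalWord M.m) := by
  rw [mDef_eq_sum_range, ← sum_patternWord]
  refine Finset.sum_congr rfl fun l _ => Finset.sum_congr rfl fun s _ => ?_
  rw [List.length_ofFn]
  split_ifs with h
  · exact (evalWord_patternWord M.m (1, b) dg x s h).symm
  · rfl

theorem mDef_eq_zero (M : CurvedAinf F A 𝒜) (b : A) {n : ℕ} (h : M.bound ≤ n) (x : Fin n → A) :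
    mDef M b x = 0 := by
  rw [mDef_eq_insertionSum M b 0 x, insertionSum, insertions_eq_zero_of_le_length _ (by simpa)]
  simp

theorem mDef_mem (M : CurvedAinf F A 𝒜) {b : A} (hb : b ∈ 𝒜 1) {n : ℕ} {dg : Fin n → ℤ}
    {x : Fin n → A} (hx : ∀ i, x i ∈ 𝒜 (dg i)) : mDef M b x ∈ 𝒜 ((∑ i, dg i) + (2 - n)) := by
  rw [mDef_eq_insertionSum M b dg x, insertionSum]
  refine multiset_sum_mem _ fun a ha => ?_
  obtain ⟨W, hW, rfl⟩ := Multiset.mem_map.1 ha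
  have h_homogeneous : ∀ w ∈ W, w.2 ∈ 𝒜 w.1 := by
    intro w hw
    obtain rfl | hw' := eq_or_mem_of_mem_insertions hW hw
    · exact hb
    · obtain ⟨i, rfl⟩ := List.mem_ofFn.1 hw'
      exact hx i
  have sum_map_sub_one (V : List (ℤ × A)) :
      (V.map fun p => p.1 - 1).sum = (V.map Prod.fst).sum - V.length := by
    induction V with
    | nil => simp
    | cons v V ih =>
      simp only [List.map_cons, List.sum_cons, List.length_cons, ih]
      push_cast
      ring
  have h_deg := sum_map_of_mem_insertions (wt := fun p => p.1 - 1) (sub_self 1) hW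
  rw [sum_map_sub_one, sum_map_sub_one, List.map_ofFn, List.sum_ofFn, List.length_ofFn] at h_deg
  convert evalWord_mem M.m h_homogeneous using 2
  simp only [Function.comp_apply] at h_deg
  linarith

/-- The multilinear map `(x₁, …, xₙ) ↦ m(e^b x₁ e^b ⋯ e^b xₙ e^b)`. -/
noncomputable def deformMap (M : CurvedAinf F A 𝒜) (b : A) (n : ℕ) :
    MultilinearMap F (fun _ : Fin n => A) A :=
  ∑ l ∈ Finset.range M.bound, ∑ s : Finset (Fin l),
    if h : s.card = n then (M.m l).toFun.restr s h b else 0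

theorem deformMap_apply (M : CurvedAinf F A 𝒜) (b : A) {n : ℕ} (x : Fin n → A) :
    deformMap M b n x = mDef M b x := by
  rw [mDef_eq_sum_range]
  simp only [deformMap, _root_.sum_apply]
  refine Finset.sum_congr rfl fun l _ => Finset.sum_congr rfl fun s _ => ?_
  split_ifs <;> rfl

/-- The operation `m(e^b x₁ e^b ⋯ e^b xₙ e^b)` as a graded operation. -/
noncomputable def deformOp (M : CurvedAinf F A 𝒜) {b : A} (hb : b ∈ 𝒜 1) (n : ℕ) :
    GradedOp F A 𝒜 n (2 - (n : ℤ)) where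
  toFun := deformMap M b n
  map_graded dg x hx := by
    rw [deformMap_apply]
    exact mDef_mem M hb hx

theorem evalWord_deformOp (M : CurvedAinf F A 𝒜) {b : A} (hb : b ∈ 𝒜 1) (W : List (ℤ × A)) :
    evalWord (deformOp M hb) W = insertionSum (1, b) M.bound W (evalWord M.m) := by
  rw [evalWord, deformOp, deformMap_apply, mDef_eq_insertionSum M b fun i => (W.get i).1]
  simp

theorem curvedEqns_deformOp (M : CurvedAinf F A 𝒜) {b : A} (hb : b ∈ 𝒜 1) :
    CurvedEqns 𝒜 (deformOp M hb) := by
  rw [curvedEqns_iff_stasheffSum_eq_zero]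
  intro L hL
  have evalWord_eq_zero (W : List (ℤ × A)) (hW : M.bound ≤ W.length) : evalWord M.m W = 0 :=
    M.m_bound _ hW _
  rw [funext (evalWord_deformOp M hb),
    stasheffSum_insertionSum rfl evalWord_eq_zero (isLinearMap_evalWord M.m)]
  refine Multiset.sum_eq_zero fun a ha => ?_
  obtain ⟨W, hW, rfl⟩ := Multiset.mem_map.1 ha
  refine (curvedEqns_iff_stasheffSum_eq_zero M.m).1 M.curved W fun w hw => ?_
  obtain rfl | hwL := eq_or_mem_of_mem_insertions hW hw
  exacts [hb, hL w hwL]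

/-- The curved `A∞`-algebra obtained by deforming `M` by `b`. -/
noncomputable def deform (M : CurvedAinf F A 𝒜) {b : A} (hb : b ∈ 𝒜 1) : CurvedAinf F A 𝒜 where
  isInternal := M.isInternal
  m := deformOp M hb
  bound := M.bound
  m_bound n hn x := by rw [deformOp, deformMap_apply, mDef_eq_zero M b hn]
  curved := curvedEqns_deformOp M hb

end Deformation

section Homomorphisms

variable {F : Type*} [Field F] {A : Type*} [AddCommGroup A] [Module F A]
  {𝒜 : ℤ → Submodule F A}

/-- `M₁` has the operations `m̃ₙ(x₁, …, xₙ) = m(e^b x₁ e^b ⋯ e^b xₙ e^b)` of the deformation of `M`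
by `b`. -/
def IsDeformation (M₁ M : CurvedAinf F A 𝒜) (b : A) : Prop :=
  ∀ (n : ℕ) (dg : Fin n → ℤ) (x : Fin n → A), (∀ i, x i ∈ 𝒜 (dg i)) →
    (M₁.m n).toFun x = mDef M b x

theorem isDeformation_deform (M : CurvedAinf F A 𝒜) {b : A} (hb : b ∈ 𝒜 1) :
    IsDeformation (deform M hb) M b :=
  fun _ _ x _ => deformMap_apply M b x

/-- The condition `f₁ = id` and `fₙ = 0` for `n ≥ 2` on the components of an almost identity
endomorphism. -/
structure IsAlmostIdentity {deg : ℕ → ℤ} (f : ∀ n : ℕ, GradedOp F A 𝒜 n (deg n)) : Prop where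
  one_apply : ∀ x : Fin 1 → A, (f 1).toFun x = x 0
  apply_eq_zero : ∀ n, 2 ≤ n → ∀ x, (f n).toFun x = 0

/-- The almost identity endomorphism with `f₀ = b`. -/
noncomputable def almostIdentity {b : A} (hb : b ∈ 𝒜 1) :
    ∀ n : ℕ, GradedOp F A 𝒜 n (1 - (n : ℤ))
  | 0 => ⟨MultilinearMap.constOfIsEmpty F _ b, fun _ _ _ => by simpa using hb⟩
  | 1 => ⟨MultilinearMap.ofSubsingleton F A A (0 : Fin 1) LinearMap.id, fun _ _ hx => by
      simpa using hx 0⟩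
  | _ + 2 => ⟨0, fun _ _ _ => Submodule.zero_mem _⟩

theorem isAlmostIdentity_almostIdentity {b : A} (hb : b ∈ 𝒜 1) :
    IsAlmostIdentity (almostIdentity (F := F) hb) where
  one_apply _ := rfl
  apply_eq_zero
    | _ + 2, _, _ => rfl

namespace IsAlmostIdentity

variable {deg deg' : ℕ → ℤ} {f : ∀ n : ℕ, GradedOp F A 𝒜 n (deg n)}

theorem apply_of_arity_eq_one (hf : IsAlmostIdentity f) {n : ℕ} (hn : n = 1) (x : Fin n → A) :
    (f n).toFun x = x ⟨0, by omega⟩ := by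
  subst hn
  exact hf.one_apply x

theorem sum_splice_eq (hf : IsAlmostIdentity f) (m : ∀ n : ℕ, GradedOp F A 𝒜 n (deg' n))
    {n : ℕ} (dg : Fin n → ℤ) (x : Fin n → A) :
    (∑ r : Fin (n + 1), ∑ s : Fin (n + 1 - (r : ℕ)), sgn F (degSum dg r - (r : ℕ)) •
        (f ((r : ℕ) + 1 + (n - ((r : ℕ) + (s : ℕ))))).toFun
          (splice x r s ((m s).toFun (blockFun x r s))))
      = (m n).toFun x := by
  have eq_zero (r s : ℕ) (h : r ≠ 0 ∨ r + s < n) (a : A) :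
      sgn F (degSum dg r - (r : ℕ)) • (f (r + 1 + (n - (r + s)))).toFun (splice x r s a) = 0 := by
    rw [hf.apply_eq_zero _ (by omega), smul_zero]
  have blockFun_eq : blockFun x 0 n = x := by
    funext i
    simp [blockFun, get]
  rw [Fintype.sum_eq_single 0, Fintype.sum_eq_single ⟨n, by simp⟩]
  · rw [hf.apply_of_arity_eq_one (by simp)]
    simp [splice, sgn, degSum, blockFun_eq]
  · intro s hs
    have hs_ne : (s : ℕ) ≠ n := fun h => hs (Fin.ext h)
    have hs_lt : (s : ℕ) < n + 1 - 0 := s.2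
    exact eq_zero 0 s (.inr (by omega)) _
  · intro r hr
    exact Finset.sum_eq_zero fun s _ => eq_zero r s (.inl (by simpa using hr)) _

theorem apply_indicator (hf : IsAlmostIdentity f) {n k : ℕ} (x : Fin n → A) (s : Finset (Fin k))
    (h : s.card = n) (j : Fin k) :
    (f (if j ∈ s then 1 else 0)).toFun
        (fun i => get x (offsetSum (fun j => if j ∈ s then 1 else 0) j + (i : ℕ)))
      = if hj : j ∈ s then x ((s.orderIsoOfFin h).symm ⟨j, hj⟩)
        else (f 0).toFun (fun i : Fin 0 => i.elim0) := by
  rw [offsetSum_indicator]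
  by_cases hj : j ∈ s
  · have h_lt : (s.filter (· < j)).card < n := h ▸ card_filter_lt_lt_card hj
    rw [dif_pos hj, hf.apply_of_arity_eq_one (if_pos hj), add_zero, get, dif_pos h_lt]
    exact congrArg x (Fin.ext (coe_orderIsoOfFin_symm_eq_card_filter_lt s h ⟨j, hj⟩).symm)
  · rw [dif_neg hj, apply_of_arity_eq_zero f (if_neg hj)]

theorem finsum_antidiagonalTuple_eq (hf : IsAlmostIdentity f) (M : CurvedAinf F A 𝒜) {n : ℕ}
    (x : Fin n → A) :
    (∑ᶠ k : ℕ, ∑ c ∈ Finset.Nat.antidiagonalTuple k n,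
        (M.m k).toFun (fun j => (f (c j)).toFun (fun i => get x (offsetSum c j + (i : ℕ)))))
      = mDef M ((f 0).toFun (fun i : Fin 0 => i.elim0)) x := by
  refine finsum_congr fun k => ?_
  rw [sum_antidiagonalTuple_eq_sum_finset n fun c j hj =>
    (M.m k).toFun.map_coord_zero j (hf.apply_eq_zero _ hj _)]
  refine Finset.sum_congr rfl fun s _ => ?_
  split_ifs with h
  · exact (M.m k).toFun.congr_arg (funext fun j => hf.apply_indicator x s h j)
  · rfl

theorem curvedHomEqns_iff_isDeformation {f : ∀ n : ℕ, GradedOp F A 𝒜 n (1 - (n : ℤ))}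
    (hf : IsAlmostIdentity f) {M₁ M : CurvedAinf F A 𝒜} :
    CurvedHomEqns 𝒜 M₁ M f ↔ IsDeformation M₁ M ((f 0).toFun (fun i : Fin 0 => i.elim0)) := by
  simp only [CurvedHomEqns, IsDeformation, hf.sum_splice_eq, hf.finsum_antidiagonalTuple_eq]

end IsAlmostIdentity

end Homomorphisms

section SquareZero

variable {F : Type*} [Field F] {A : Type*} [AddCommGroup A] [Module F A]
  {𝒜 : ℤ → Submodule F A}

theorem evalWord_singleton {deg : ℕ → ℤ} (m : ∀ n : ℕ, GradedOp F A 𝒜 n (deg n)) (y : ℤ × A) :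
    evalWord m [y] = (m 1).toFun fun _ => y.2 :=
  evalWord_eq m rfl fun i _ hi => by simp [Nat.lt_one_iff.1 hi]

theorem evalWord_pair {deg : ℕ → ℤ} (m : ∀ n : ℕ, GradedOp F A 𝒜 n (deg n)) (y z : ℤ × A) :
    evalWord m [y, z] = (m 2).toFun ![y.2, z.2] :=
  evalWord_eq m rfl fun i _ hi => by
    have hi_two : i < 2 := hi
    interval_cases i <;> rfl

theorem m_one_m_one_add (M : CurvedAinf F A 𝒜) {d : ℤ} {x : A} (hx : x ∈ 𝒜 d) :
    (M.m 1).toFun (fun _ => (M.m 1).toFun fun _ => x)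
        + (M.m 2).toFun ![(M.m 0).toFun (fun i : Fin 0 => i.elim0), x]
      = sgn F d • (M.m 2).toFun ![x, (M.m 0).toFun (fun i : Fin 0 => i.elim0)] := by
  have evalWord_nil : evalWord M.m [] = (M.m 0).toFun (fun i : Fin 0 => i.elim0) :=
    evalWord_eq M.m rfl fun _ _ hi => absurd hi (Nat.not_lt_zero _)
  have koszulSign_nil : koszulSign F ([] : List (ℤ × A)) = 1 := by simp [koszulSign, sgn]
  have koszulSign_singleton : koszulSign F [(d, x)] = -sgn F d := by
    simp [koszulSign, sgn, zpow_sub₀, div_neg]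
  have h := (curvedEqns_iff_stasheffSum_eq_zero M.m).1 M.curved [(d, x)] (by simpa using hx)
  simp only [stasheffSum, splitSum_cons, splitSum_nil, List.nil_append, List.cons_append,
    evalWord_nil, evalWord_singleton, evalWord_pair, koszulSign_nil, koszulSign_singleton,
    one_smul, neg_smul] at h
  rw [← sub_eq_zero, ← h]
  abel

theorem m_one_m_one_eq_zero_iff (M : CurvedAinf F A 𝒜) :
    (∀ y : A, (M.m 1).toFun (fun _ => (M.m 1).toFun fun _ => y) = 0) ↔
      ∀ (d : ℤ) (x : A), x ∈ 𝒜 d →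
        (M.m 2).toFun ![(M.m 0).toFun (fun i : Fin 0 => i.elim0), x]
          = sgn F d • (M.m 2).toFun ![x, (M.m 0).toFun (fun i : Fin 0 => i.elim0)] := by
  let D : A →ₗ[F] A := (MultilinearMap.ofSubsingleton F A A (0 : Fin 1)).symm (M.m 1).toFun
  have h_ker : (∀ y, D (D y) = 0) ↔ ∀ d, 𝒜 d ≤ (D ∘ₗ D).ker := by
    rw [← iSup_le_iff, M.isInternal.submodule_iSup_eq_top, top_le_iff, LinearMap.ker_eq_top,
      LinearMap.ext_iff]
    rfl
  refine h_ker.trans (forall_congr' fun d => forall₂_congr fun x hx => ?_)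
  rw [← m_one_m_one_add M hx, right_eq_add]
  rfl

theorem IsDeformation.m_one_m_one_eq_zero_iff {M₁ M : CurvedAinf F A 𝒜} {b : A}
    (h : IsDeformation M₁ M b) :
    (∀ y : A, (M₁.m 1).toFun (fun _ => (M₁.m 1).toFun fun _ => y) = 0) ↔
      ∀ (d : ℤ) (x : A), x ∈ 𝒜 d →
        mDef M b ![mDef M b (fun i : Fin 0 => i.elim0), x]
          = sgn F d • mDef M b ![x, mDef M b (fun i : Fin 0 => i.elim0)] := by
  rw [Ainf.m_one_m_one_eq_zero_iff M₁]
  refine forall₃_congr fun d x hx => ?_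
  have h_zero : (M₁.m 0).toFun (fun i : Fin 0 => i.elim0) ∈ 𝒜 2 := nullary_mem M₁.m
  rw [h 2 ![2, d] _ (by simp [Fin.forall_fin_two, h_zero, hx]),
    h 2 ![d, 2] _ (by simp [Fin.forall_fin_two, h_zero, hx]), h 0 (fun i => i.elim0) _ nofun]

end SquareZero

end Ainf

open Ainf in
/-- Let `(A, m)` be a curved A∞-algebra.  Then `(A, m)` can be
deformed through an almost identity endomorphism into a curved A∞-algebra `(A, m̃)`
satisfying `m̃_1 ∘ m̃_1 = 0` if and only if the obstruction equation
`m(e^b m(e^b) e^b x e^b) = (-1)^{|x|} m(e^b x e^b m(e^b) e^b)` for all homogeneous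
`x ∈ A` has a solution `b ∈ A^1`. -/
theorem deformation_squarezero_iff_obstruction {F : Type*} [Field F] {A : Type*}
    [AddCommGroup A] [Module F A] (𝒜 : ℤ → Submodule F A)
    (M : CurvedAinf F A 𝒜) :
    (∃ (M1 : CurvedAinf F A 𝒜) (f : ∀ n : ℕ, GradedOp F A 𝒜 n (1 - (n : ℤ))),
        CurvedHomEqns 𝒜 M1 M f ∧ (∀ x : Fin 1 → A, (f 1).toFun x = x 0) ∧
        (∀ n, 2 ≤ n → ∀ x, (f n).toFun x = 0) ∧
        (∀ y : A, (M1.m 1).toFun (fun _ => (M1.m 1).toFun (fun _ => y)) = 0)) ↔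
    (∃ b, b ∈ 𝒜 1 ∧ ∀ (d : ℤ) (x : A), x ∈ 𝒜 d →
        mDef M b ![mDef M b (fun i : Fin 0 => i.elim0), x]
          = sgn F d • mDef M b ![x, mDef M b (fun i : Fin 0 => i.elim0)]) := by
  constructor
  · rintro ⟨M1, f, h_hom, h_one, h_zero, h_sq⟩
    have h_deformation := (IsAlmostIdentity.mk h_one h_zero).curvedHomEqns_iff_isDeformation.1 h_hom
    exact ⟨_, nullary_mem f, h_deformation.m_one_m_one_eq_zero_iff.1 h_sq⟩
  · rintro ⟨b, hb, h_obstruction⟩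
    have h_deformation := isDeformation_deform M hb
    have h_id := isAlmostIdentity_almostIdentity (F := F) hb
    exact ⟨deform M hb, almostIdentity hb, h_id.curvedHomEqns_iff_isDeformation.2 h_deformation,
      h_id.one_apply, h_id.apply_eq_zero, h_deformation.m_one_m_one_eq_zero_iff.2 h_obstruction⟩
end
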